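/- Let C be a category with pullbacks which has Kähler differentials, and let X be a formally unramified object of C. Then Ω_X is an initial object of Ab(C/X): for every Beck module M over X, the set Hom_{Ab(C/X)}(Ω_X, M) has exactly one element. -/

import Mathlib

open CategoryTheory CategoryTheory.Limits

universe v u

/-- A Beck module over `Y`: an abelian group object in the overcategory `C/Y`,
presented by its underlying morphism `φ : M ⟶ Y`, a unit (zero) section `unit`,
an addition `add` over `Y`, and a negation `neg` over `Y`, satisfying the abelian
group axioms on generalized elements (equivalently, via Yoneda, making it an
abelian group object of `C/Y`). -/
structure BeckModule {C : Type u} [Category.{v} C] [HasPullbacks C] (Y : C) where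
  M : C
  φ : M ⟶ Y
  unit : Y ⟶ M
  unit_φ : unit ≫ φ = 𝟙 Y
  add : pullback φ φ ⟶ M
  add_φ : add ≫ φ = pullback.fst φ φ ≫ φ
  neg : M ⟶ M
  neg_φ : neg ≫ φ = φ
  add_assoc : ∀ {T : C} (a b c : T ⟶ M) (hab : a ≫ φ = b ≫ φ) (hbc : b ≫ φ = c ≫ φ),
    pullback.lift (pullback.lift a b hab ≫ add) c
        (by rw [Category.assoc, add_φ, ← Category.assoc, pullback.lift_fst, hab, hbc]) ≫ add =
      pullback.lift a (pullback.lift b c hbc ≫ add)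
        (by rw [Category.assoc, add_φ, ← Category.assoc, pullback.lift_fst, hab]) ≫ add
  add_comm : ∀ {T : C} (a b : T ⟶ M) (h : a ≫ φ = b ≫ φ),
    pullback.lift a b h ≫ add = pullback.lift b a h.symm ≫ add
  zero_add : ∀ {T : C} (a : T ⟶ M),
    pullback.lift (a ≫ φ ≫ unit) a
        (by rw [Category.assoc, Category.assoc, unit_φ, Category.comp_id]) ≫ add = a
  add_neg : ∀ {T : C} (a : T ⟶ M),
    pullback.lift a (a ≫ neg) (by rw [Category.assoc, neg_φ]) ≫ add = a ≫ φ ≫ unit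

/-- A Beck torsor structure on `γ : Z ⟶ Y`: `γ` is an effective epimorphism, equipped
with a Beck module `mod` over `Y` and a group action `τ : M ×_Y Z ⟶ Z` in `C/Y`
(satisfying the unit and associativity axioms for an action of the group object `M`),
such that the shear morphism `(τ, π_Z) : M ×_Y Z ⟶ Z ×_Y Z` is an isomorphism in `C/Y`. -/
structure BeckTorsor {C : Type u} [Category.{v} C] [HasPullbacks C] {Z Y : C} (γ : Z ⟶ Y) where
  mod : BeckModule Y
  effEpi : EffectiveEpi γ
  τ : pullback mod.φ γ ⟶ Z
  τ_γ : τ ≫ γ = pullback.snd mod.φ γ ≫ γ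
  act_unit : ∀ {T : C} (z : T ⟶ Z),
    pullback.lift (z ≫ γ ≫ mod.unit) z
        (by rw [Category.assoc, Category.assoc, mod.unit_φ, Category.comp_id]) ≫ τ = z
  act_assoc : ∀ {T : C} (a b : T ⟶ mod.M) (z : T ⟶ Z)
      (hab : a ≫ mod.φ = b ≫ mod.φ) (hbz : b ≫ mod.φ = z ≫ γ),
    pullback.lift (pullback.lift a b hab ≫ mod.add) z
        (by rw [Category.assoc, mod.add_φ, ← Category.assoc, pullback.lift_fst, hab, hbz]) ≫ τ =
      pullback.lift a (pullback.lift b z hbz ≫ τ)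
        (by rw [Category.assoc, τ_γ, ← Category.assoc, pullback.lift_snd, hab, hbz]) ≫ τ
  shear_iso : IsIso (pullback.lift τ (pullback.snd mod.φ γ) τ_γ :
    pullback mod.φ γ ⟶ pullback γ γ)

/-- An object `X` is formally unramified if, for every Beck torsor `γ : Z ⟶ Y` in `C`,
the canonical map `Hom(X, Z) → Hom(X, Y)` given by composition with `γ` is injective. -/
def FormallyUnramified {C : Type u} [Category.{v} C] [HasPullbacks C] (X : C) : Prop :=
  ∀ ⦃Z Y : C⦄ (γ : Z ⟶ Y), BeckTorsor γ →
    Function.Injective (fun ψ : X ⟶ Z => ψ ≫ γ)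

/-- A morphism of Beck modules over `Y`: a morphism over `Y` commuting with the
addition (i.e. a morphism of abelian group objects in `C/Y`). -/
@[ext]
structure BeckModuleHom {C : Type u} [Category.{v} C] [HasPullbacks C] {Y : C}
    (N₁ N₂ : BeckModule Y) where
  f : N₁.M ⟶ N₂.M
  w : f ≫ N₂.φ = N₁.φ
  map_add : ∀ {T : C} (a b : T ⟶ N₁.M) (h : a ≫ N₁.φ = b ≫ N₁.φ),
    (pullback.lift a b h ≫ N₁.add) ≫ f =
      pullback.lift (a ≫ f) (b ≫ f)
        (by rw [Category.assoc, Category.assoc, w, h]) ≫ N₂.add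

/-- The category `Ab(C/Y)` of Beck modules over `Y`. -/
instance BeckModule.category {C : Type u} [Category.{v} C] [HasPullbacks C] (Y : C) :
    Category (BeckModule Y) where
  Hom := BeckModuleHom
  id N := ⟨𝟙 N.M, Category.id_comp _, by intro T a b h; simp⟩
  comp {N₁ N₂ N₃} f g := ⟨f.f ≫ g.f, by rw [Category.assoc, g.w, f.w], by
    intro T a b h
    rw [← Category.assoc, f.map_add, g.map_add]
    simp⟩
  id_comp f := by apply BeckModuleHom.ext; simp
  comp_id f := by apply BeckModuleHom.ext; simp
  assoc f g h := by apply BeckModuleHom.ext; simp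

/-- The forgetful functor `Ab(C/Y) ⥤ C/Y`. -/
def forgetBeck {C : Type u} [Category.{v} C] [HasPullbacks C] (Y : C) :
    BeckModule Y ⥤ Over Y where
  obj N := Over.mk N.φ
  map {N₁ N₂} f := Over.homMk f.f f.w
  map_id N := by ext; simp; rfl
  map_comp f g := by ext; simp; rfl

/-!
Translation makes a Beck module `N` over `X` a torsor over itself: its underlying morphism is split
by the zero section, hence an effective epimorphism, and `(a, b) ↦ (a + b, b)` is inverted by
subtraction. A formally unramified `A` over `X` therefore has at most one morphism to `N` over `X`,
namely zero, and these morphisms correspond to the morphisms from the differentials of `A` to `N`.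
-/

namespace BeckModule

variable {C : Type u} [Category.{v} C] [HasPullbacks C] {T Y : C} (N : BeckModule Y)

/-- The generalized elements of `N` lying over `t : T ⟶ Y`, which are the morphisms from `t` to
`N.φ` in `C/Y`; the group structure of `N` makes them an abelian group. -/
@[ext]
structure Point (t : T ⟶ Y) where
  hom : T ⟶ N.M
  hom_φ : hom ≫ N.φ = t

namespace Point

variable {N} {t : T ⟶ Y}

/-- The generalized element `(a, b)` of `M ×_Y M`. -/
noncomputable def pair (a b : N.Point t) : T ⟶ pullback N.φ N.φ :=
  pullback.lift a.hom b.hom (a.hom_φ.trans b.hom_φ.symm)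

@[simp]
lemma pair_fst (a b : N.Point t) : a.pair b ≫ pullback.fst N.φ N.φ = a.hom :=
  pullback.lift_fst ..

@[simp]
lemma pair_snd (a b : N.Point t) : a.pair b ≫ pullback.snd N.φ N.φ = b.hom :=
  pullback.lift_snd ..

lemma pair_inj {a b a' b' : N.Point t} : a.pair b = a'.pair b' ↔ a = a' ∧ b = b' := by
  simp [pullback.hom_ext_iff, Point.ext_iff]

lemma exists_pair_eq {p : T ⟶ pullback N.φ N.φ} (hp : p ≫ pullback.snd N.φ N.φ ≫ N.φ = t) :
    ∃ a b : N.Point t, a.pair b = p :=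
  ⟨⟨p ≫ pullback.fst N.φ N.φ, by rw [Category.assoc, pullback.condition, hp]⟩,
    ⟨p ≫ pullback.snd N.φ N.φ, by rw [Category.assoc, hp]⟩,
    pullback.hom_ext (pair_fst _ _) (pair_snd _ _)⟩

instance : Zero (N.Point t) where
  zero := ⟨t ≫ N.unit, by rw [Category.assoc, N.unit_φ, Category.comp_id]⟩

noncomputable instance : Add (N.Point t) where
  add a b := ⟨a.pair b ≫ N.add, by
    rw [Category.assoc, N.add_φ, ← Category.assoc, pair_fst, a.hom_φ]⟩

instance : Neg (N.Point t) where
  neg a := ⟨a.hom ≫ N.neg, by rw [Category.assoc, N.neg_φ, a.hom_φ]⟩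

lemma pair_comp_add (a b : N.Point t) : a.pair b ≫ N.add = (a + b).hom :=
  rfl

protected lemma add_assoc (a b c : N.Point t) : a + b + c = a + (b + c) :=
  Point.ext (N.add_assoc a.hom b.hom c.hom _ _)

protected lemma add_comm (a b : N.Point t) : a + b = b + a :=
  Point.ext (N.add_comm a.hom b.hom _)

protected lemma zero_add (a : N.Point t) : 0 + a = a := by
  obtain ⟨a, rfl⟩ := a
  apply Point.ext
  change pullback.lift ((a ≫ N.φ) ≫ N.unit) a _ ≫ N.add = a
  simpa only [Category.assoc] using N.zero_add a

protected lemma neg_add_cancel (a : N.Point t) : -a + a = 0 := by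
  rw [Point.add_comm]
  obtain ⟨a, rfl⟩ := a
  apply Point.ext
  change pullback.lift a (a ≫ N.neg) _ ≫ N.add = (a ≫ N.φ) ≫ N.unit
  simpa only [Category.assoc] using N.add_neg a

noncomputable instance : AddCommGroup (N.Point t) where
  __ := AddGroup.ofLeftAxioms Point.add_assoc Point.zero_add Point.neg_add_cancel
  add_comm := Point.add_comm

end Point

/-- The morphism `(a, b) ↦ (a + b, b)`, which is the shear morphism of the action of `N` on itself
by translation. -/
noncomputable def shear : pullback N.φ N.φ ⟶ pullback N.φ N.φ :=
  pullback.lift N.add (pullback.snd N.φ N.φ) (by rw [N.add_φ, pullback.condition])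

lemma shear_fst : N.shear ≫ pullback.fst N.φ N.φ = N.add :=
  pullback.lift_fst ..

lemma shear_snd : N.shear ≫ pullback.snd N.φ N.φ = pullback.snd N.φ N.φ :=
  pullback.lift_snd ..

variable {N} in
lemma Point.pair_comp_shear {t : T ⟶ Y} (a b : N.Point t) :
    a.pair b ≫ N.shear = (a + b).pair b := by
  apply pullback.hom_ext
  · rw [Category.assoc, shear_fst, pair_comp_add, pair_fst]
  · rw [Category.assoc, shear_snd, pair_snd, pair_snd]

lemma comp_shear_injective : Function.Injective fun p : T ⟶ pullback N.φ N.φ => p ≫ N.shear := by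
  intro p q (h : p ≫ N.shear = q ≫ N.shear)
  have hsnd : q ≫ pullback.snd N.φ N.φ = p ≫ pullback.snd N.φ N.φ := by
    rw [← N.shear_snd, ← Category.assoc, ← h, Category.assoc]
  obtain ⟨t, hp⟩ : ∃ t, p ≫ pullback.snd N.φ N.φ ≫ N.φ = t := ⟨_, rfl⟩
  have hq : q ≫ pullback.snd N.φ N.φ ≫ N.φ = t := by rw [reassoc_of% hsnd, hp]
  obtain ⟨a, b, rfl⟩ := Point.exists_pair_eq hp
  obtain ⟨a', b', rfl⟩ := Point.exists_pair_eq hq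
  simp only [Point.pair_comp_shear, Point.pair_inj] at h
  obtain ⟨hadd, rfl⟩ := h
  rw [add_right_cancel hadd]

lemma comp_shear_surjective :
    Function.Surjective fun p : T ⟶ pullback N.φ N.φ => p ≫ N.shear := by
  intro q
  obtain ⟨a, b, hq⟩ := Point.exists_pair_eq (p := q) rfl
  exact ⟨(a - b).pair b, by simp only [Point.pair_comp_shear, sub_add_cancel, hq]⟩

instance isIso_shear : IsIso N.shear :=
  (isIso_iff_yoneda_map_bijective _).2 fun _ => ⟨N.comp_shear_injective, N.comp_shear_surjective⟩

/-- The Beck torsor given by the action of `N` on itself by translation. -/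
noncomputable def selfTorsor : BeckTorsor N.φ where
  mod := N
  effEpi :=
    have : IsSplitEpi N.φ := .mk' ⟨N.unit, N.unit_φ⟩
    inferInstance
  τ := N.add
  τ_γ := by rw [N.add_φ, pullback.condition]
  act_unit := N.zero_add
  act_assoc := N.add_assoc
  shear_iso := N.isIso_shear

lemma subsingleton_point_of_formallyUnramified (hT : FormallyUnramified T) (t : T ⟶ Y) :
    Subsingleton (N.Point t) where
  allEq a b := Point.ext <| hT N.φ N.selfTorsor (a.hom_φ.trans b.hom_φ.symm)

/-- Morphisms from `A` to `N` in `C/Y` are the generalized elements of `N` over `A.hom`. -/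
def overHomEquivPoint (A : Over Y) : (A ⟶ (forgetBeck Y).obj N) ≃ N.Point A.hom where
  toFun f := ⟨f.left, Over.w f⟩
  invFun a := Over.homMk a.hom a.hom_φ
  left_inv _ := rfl
  right_inv _ := rfl

end BeckModule

/-- `ΩA` is the module of differentials of `A` over `X`, given by its universal property. -/
theorem kaehler_initial_of_formallyUnramified_general {C : Type u} [Category.{v} C]
    [HasPullbacks C] {X : C} {A : Over X} {ΩA : BeckModule X}
    (hΩA : (forgetBeck X ⋙ coyoneda.obj (.op A)).CorepresentableBy ΩA)
    (hA : FormallyUnramified A.left) (N : BeckModule X) : Nonempty (Unique (ΩA ⟶ N)) :=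
  have := N.subsingleton_point_of_formallyUnramified hA A.hom
  have : Unique (N.Point A.hom) := uniqueOfSubsingleton 0
  ⟨(hΩA.homEquiv.trans (N.overHomEquivPoint A)).unique⟩

/-- If `C` has Kähler differentials and `X` is formally unramified, then
`Ω_X = Ω(𝟙 X)` is an initial object of `Ab(C/X)`: for every Beck module `M` over `X`,
the set `Hom_{Ab(C/X)}(Ω_X, M)` has exactly one element. -/
theorem kaehler_initial_of_formallyUnramified {C : Type u} [Category.{v} C]
    [HasPullbacks C] (Ω : ∀ Y : C, Over Y ⥤ BeckModule Y)
    (adj : ∀ Y : C, Ω Y ⊣ forgetBeck Y) (X : C) (hX : FormallyUnramified X) :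
    ∀ N : BeckModule X, Nonempty (Unique ((Ω X).obj (Over.mk (𝟙 X)) ⟶ N)) :=
  kaehler_initial_of_formallyUnramified_general ((adj X).corepresentableBy _) hX
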